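/- arXiv:1508.01184 — 10 statements merged into one kernel-verified Lean document; each statement's English description precedes it below -/
import Mathlib

section
/- Suppose p* ∈ P satisfies: (a) V(p;x) ≤ V(p*;x) for every p < p* with x ∈ closure(G_p); and (b) V(p₁;x) ≥ V(p₂;x) whenever p* ≤ p₁ < p₂ and x ∈ G_{p₂}. Then V(p*;x) ≥ V(p;x) for all p ∈ P, i.e., p* solves the variational problem sup_{p∈P} V(p;x) for the fixed initial point x. -/
open Set

/-!
Let `q` be a parameter with `x ∈ ∂G_q`. If `x ∈ G_{p*}`, monotonicity forces `q < p*`, so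
condition (a) at `q`, where the value is `g x`, gives `g x ≤ V(p*; x)`; if `x ∉ G_{p*}`, this is an
equality. Hence no `p` with `x ∉ G_p` beats `p*`, and a `p` with `x ∈ G_p` is directly covered by
(a) or (b).
-/

section Family

variable {ι X β : Type*} [LinearOrder ι] {G : ι → Set X} {P : Set ι} {x : X} {p q pstar : ι}

lemma lt_of_monotoneOn_of_notMem_of_mem (hmono : MonotoneOn G P) (hq : q ∈ P) (hp : p ∈ P)
    (hxq : x ∉ G q) (hxp : x ∈ G p) : q < p :=
  lt_of_not_ge fun hpq => hxq (hmono hp hq hpq hxp)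

variable [TopologicalSpace X] [Preorder β] {V : ι → X → β} {g : X → β}

lemma exit_payoff_le_value (hGopen : ∀ p ∈ P, IsOpen (G p)) (hmono : MonotoneOn G P)
    (hthick : ∃ q ∈ P, x ∈ frontier (G q)) (hVout : ∀ p ∈ P, x ∉ G p → V p x = g x)
    (hpstar : pstar ∈ P) (ha : ∀ p ∈ P, p < pstar → x ∈ closure (G p) → V p x ≤ V pstar x) :
    g x ≤ V pstar x := by
  by_cases hxstar : x ∈ G pstar
  · obtain ⟨q, hq, hxfrontier⟩ := hthick
    obtain ⟨hxclosure, hxq⟩ : x ∈ closure (G q) \ G q := (hGopen q hq).frontier_eq ▸ hxfrontier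
    have hlt : q < pstar := lt_of_monotoneOn_of_notMem_of_mem hmono hq hpstar hxq hxstar
    calc
      g x = V q x := (hVout q hq hxq).symm
      _ ≤ V pstar x := ha q hq hlt hxclosure
  · exact (hVout pstar hpstar hxstar).ge

theorem stmt_1_general (hGopen : ∀ p ∈ P, IsOpen (G p)) (hmono : MonotoneOn G P)
    (hthick : ∃ q ∈ P, x ∈ frontier (G q)) (hVout : ∀ p ∈ P, x ∉ G p → V p x = g x)
    (hpstar : pstar ∈ P) (ha : ∀ p ∈ P, p < pstar → x ∈ closure (G p) → V p x ≤ V pstar x)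
    (hb : ∀ p ∈ P, pstar < p → x ∈ G p → V p x ≤ V pstar x) :
    IsMaxOn (V · x) P pstar := by
  refine isMaxOn_iff.2 fun p hp => ?_
  by_cases hxp : x ∈ G p
  · rcases lt_trichotomy p pstar with hlt | rfl | hgt
    · exact ha p hp hlt (subset_closure hxp)
    · exact le_rfl
    · exact hb p hp hgt hxp
  · calc
      V p x = g x := hVout p hp hxp
      _ ≤ V pstar x := exit_payoff_le_value hGopen hmono hthick hVout hpstar ha

end Family

/-- Theorem 1(ii): sufficient conditions for optimality in the variational problem
over a monotone, thick one-parametric family of open regions. -/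
theorem stmt_1 {n : ℕ} (hn : 1 ≤ n) (D : Set (Fin n → ℝ)) (P : Set ℝ)
    (G : ℝ → Set (Fin n → ℝ))
    (hGopen : ∀ p ∈ P, IsOpen (G p))
    (hmono : ∀ p₁ ∈ P, ∀ p₂ ∈ P, p₁ < p₂ → G p₁ ⊆ G p₂)
    (hthick : ∀ y ∈ D, ∃! q : ℝ, q ∈ P ∧ y ∈ frontier (G q))
    (g : (Fin n → ℝ) → ℝ) (V : ℝ → (Fin n → ℝ) → ℝ)
    (hVout : ∀ p ∈ P, ∀ y ∈ D, y ∉ G p → V p y = g y)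
    (x : Fin n → ℝ) (hx : x ∈ D)
    (pstar : ℝ) (hpstar : pstar ∈ P)
    (ha : ∀ p ∈ P, p < pstar → x ∈ closure (G p) → V p x ≤ V pstar x)
    (hb : ∀ p₁ ∈ P, ∀ p₂ ∈ P, pstar ≤ p₁ → p₁ < p₂ → x ∈ G p₂ → V p₂ x ≤ V p₁ x) :
    ∀ p ∈ P, V p x ≤ V pstar x := by
  have hmonoOn : MonotoneOn G P := monotoneOn_iff_forall_lt.2 fun p₁ h₁ p₂ h₂ => hmono p₁ h₁ p₂ h₂
  exact isMaxOn_iff.1 <| stmt_1_general hGopen hmonoOn (hthick x hx).exists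
    (fun p hp => hVout p hp x hx) hpstar ha fun p hp => hb pstar hpstar p hp le_rfl
end

section
/- Assume g(x₀) > 0 for some x₀ ∈ I. A threshold p* ∈ I is optimal over the class of threshold stopping times (that is, V(p*;x) ≥ V(p;x) for all p, x ∈ I) if and only if the following two conditions hold: (i) h(p) ≤ h(p*) for every p ∈ I with p < p*; and (ii) h is non-increasing on I ∩ [p*, ∞), i.e., h(p₂) ≤ h(p₁) whenever p* ≤ p₁ ≤ p₂, p₁, p₂ ∈ I. -/
open Set

/-!
Writing `h = g / ψ`, both branches of the threshold payoff are the single formula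
`V(p; x) = h (max p x) * ψ x`. Since `ψ x > 0`, optimality of `q` says exactly that
`h (max p x) ≤ h (max q x)` for all `p` and `x`: the choice `x = p < q` gives the first condition,
the choice `q ≤ x ≤ p` gives the second, and together these two choices cover every case.
-/

section Order

variable {α β : Type*} [Preorder β] {f : α → β} {s : Set α} {q : α}

theorem antitoneOn_inter_Ici_iff [Preorder α] :
    AntitoneOn f (s ∩ Ici q) ↔ ∀ a ∈ s, ∀ b ∈ s, q ≤ a → a ≤ b → f b ≤ f a :=
  ⟨fun hf _ ha _ hb hqa hab => hf ⟨ha, hqa⟩ ⟨hb, hqa.trans hab⟩ hab,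
    fun hf a ha b hb hab => hf a ha.1 b hb.1 ha.2 hab⟩

theorem forall_apply_max_le_iff [LinearOrder α] (hq : q ∈ s) :
    (∀ p ∈ s, ∀ x ∈ s, f (max p x) ≤ f (max q x)) ↔
      (∀ p ∈ s, p < q → f p ≤ f q) ∧ AntitoneOn f (s ∩ Ici q) := by
  constructor
  · refine fun hmax => ⟨fun p hp hpq => ?_, fun a ha b hb hab => ?_⟩
    · simpa only [max_self, max_eq_left hpq.le] using hmax p hp p hp
    · simpa only [max_eq_left hab, max_eq_right (mem_Ici.1 ha.2)] using hmax b hb.1 a ha.1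
  · rintro ⟨hbelow, hanti⟩ p hp x hx
    have max_mem {y : α} (hy : y ∈ s) : max y x ∈ s := max_rec' (· ∈ s) hy hx
    rcases lt_or_ge (max p x) q with hlt | hge
    · rw [max_eq_left ((le_max_right p x).trans hlt.le)]
      exact hbelow _ (max_mem hp) hlt
    · exact hanti ⟨max_mem hq, le_max_left q x⟩ ⟨max_mem hp, hge⟩
        (max_le hge (le_max_right p x))

end Order

section ThresholdValue

variable {α K : Type*} [LinearOrder α] [Field K]

/-- The value `V(p; x)`, started from `x`, of stopping on first reaching `[p, ∞)`, for the payoff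
`g` and the increasing fundamental solution `ψ`. The expected discount factor `ψ x / ψ p` of the
passage from `x < p` up to `p` is built into the formula. -/
def thresholdValue (g ψ : α → K) (p x : α) : K :=
  if x < p then g p / ψ p * ψ x else g x

variable {g ψ : α → K} {p q x : α} {I : Set α}

theorem thresholdValue_eq_div_max_mul (hψ : ψ x ≠ 0) :
    thresholdValue g ψ p x = g (max p x) / ψ (max p x) * ψ x := by
  rcases lt_or_ge x p with hxp | hpx
  · rw [thresholdValue, if_pos hxp, max_eq_left hxp.le]
  · rw [thresholdValue, if_neg hpx.not_gt, max_eq_right hpx, div_mul_cancel₀ _ hψ]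

variable [LinearOrder K] [IsStrictOrderedRing K]

theorem thresholdValue_le_thresholdValue_iff (hψ : 0 < ψ x) :
    thresholdValue g ψ p x ≤ thresholdValue g ψ q x ↔
      g (max p x) / ψ (max p x) ≤ g (max q x) / ψ (max q x) := by
  rw [thresholdValue_eq_div_max_mul hψ.ne', thresholdValue_eq_div_max_mul hψ.ne',
    mul_le_mul_iff_left₀ hψ]

theorem stmt_2_general (hψ : ∀ x ∈ I, 0 < ψ x) (hq : q ∈ I) :
    (∀ p ∈ I, ∀ x ∈ I, thresholdValue g ψ p x ≤ thresholdValue g ψ q x) ↔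
      (∀ p ∈ I, p < q → g p / ψ p ≤ g q / ψ q) ∧
        AntitoneOn (fun p => g p / ψ p) (I ∩ Ici q) :=
  (forall₄_congr fun _ _ x hx => thresholdValue_le_thresholdValue_iff (hψ x hx)).trans
    (forall_apply_max_le_iff (f := fun p => g p / ψ p) hq)

end ThresholdValue

/-- Theorem 2: necessary and sufficient conditions for optimality of an
upper-threshold stopping time (the class of `l`-intervals). -/
theorem stmt_2 (I : Set ℝ) (hIopen : IsOpen I) (hIconn : I.OrdConnected)
    (hIne : I.Nonempty)
    (g ψ : ℝ → ℝ) (hψpos : ∀ x ∈ I, 0 < ψ x) (hψmono : StrictMonoOn ψ I)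
    (V : ℝ → ℝ → ℝ)
    (hV : ∀ p ∈ I, ∀ x ∈ I, V p x = if x < p then (g p / ψ p) * ψ x else g x)
    (hgpos : ∃ x₀ ∈ I, 0 < g x₀)
    (pstar : ℝ) (hpstar : pstar ∈ I) :
    (∀ p ∈ I, ∀ x ∈ I, V p x ≤ V pstar x) ↔
      ((∀ p ∈ I, p < pstar → g p / ψ p ≤ g pstar / ψ pstar) ∧
       (∀ p₁ ∈ I, ∀ p₂ ∈ I, pstar ≤ p₁ → p₁ ≤ p₂ → g p₂ / ψ p₂ ≤ g p₁ / ψ p₁)) := by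
  rw [← antitoneOn_inter_Ici_iff (f := fun p => g p / ψ p), ← stmt_2_general hψpos hpstar]
  exact forall₄_congr fun p hp x hx => by rw [hV p hp x hx, hV pstar hpstar x hx]; rfl
end

section
/- Assume g(x₀) > 0 for some x₀ ∈ I. A threshold p* ∈ I is optimal over the class of lower-threshold stopping times (that is, W(p*;x) ≥ W(p;x) for all p, x ∈ I) if and only if the following two conditions hold: (i) g(p)/φ(p) ≤ g(p*)/φ(p*) for every p ∈ I with p > p*; and (ii) g/φ is non-decreasing on I ∩ (−∞, p*], i.e., g(p₁)/φ(p₁) ≤ g(p₂)/φ(p₂) whenever p₁ ≤ p₂ ≤ p*, p₁, p₂ ∈ I. -/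
open Set

/-! Divided by `φ x > 0`, the payoff of the threshold `p` started at `x` is `g / φ` evaluated at
`min p x`, the point where the process stops. Hence optimality of `c` says that
`f (min p x) ≤ f (min c x)` for all `p` and `x`, where `f = g / φ`: the choice `x = p > c` gives the
bound above `c`, and `p ≤ x ≤ c` gives the monotonicity below it. -/

theorem monotoneOn_inter_Iic_iff {α β : Type*} [Preorder α] [Preorder β] {S : Set α} {f : α → β}
    {c : α} :
    MonotoneOn f (S ∩ Iic c) ↔ ∀ a ∈ S, ∀ b ∈ S, a ≤ b → b ≤ c → f a ≤ f b :=
  ⟨fun hf _ ha _ hb hab hbc => hf ⟨ha, hab.trans hbc⟩ ⟨hb, hbc⟩ hab,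
    fun hf _ ha _ hb hab => hf _ ha.1 _ hb.1 hab hb.2⟩

section LowerThreshold

variable {α β 𝕜 : Type*} [LinearOrder α] {S : Set α}

/-- The expected discounted payoff, from the initial state `x`, of stopping at the first entry
below the threshold `p`. For `p < x` the factor `φ x / φ p` is the expected discount up to that
time; the payoff is `g x` at once if `x ≤ p`. It is meaningful where `φ` does not vanish. -/
def lowerThresholdPayoff [Mul 𝕜] [Div 𝕜] (g φ : α → 𝕜) (p x : α) : 𝕜 :=
  if p < x then g p * φ x / φ p else g x

theorem lowerThresholdPayoff_eq_mul_div_min [Field 𝕜] {g φ : α → 𝕜} {x : α} (hφx : φ x ≠ 0)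
    (p : α) :
    lowerThresholdPayoff g φ p x = φ x * (g (min p x) / φ (min p x)) := by
  unfold lowerThresholdPayoff
  split_ifs with hpx
  · rw [min_eq_left hpx.le, mul_comm, mul_div_assoc]
  · rw [min_eq_right (not_lt.mp hpx), mul_div_cancel₀ _ hφx]

theorem lowerThresholdPayoff_le_iff [Field 𝕜] [LinearOrder 𝕜] [IsStrictOrderedRing 𝕜]
    {g φ : α → 𝕜} {x : α} (hφx : 0 < φ x) (p q : α) :
    lowerThresholdPayoff g φ p x ≤ lowerThresholdPayoff g φ q x ↔
      g (min p x) / φ (min p x) ≤ g (min q x) / φ (min q x) := by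
  rw [lowerThresholdPayoff_eq_mul_div_min hφx.ne', lowerThresholdPayoff_eq_mul_div_min hφx.ne',
    mul_le_mul_iff_right₀ hφx]

theorem forall_apply_min_le_apply_min_iff [Preorder β] {f : α → β} {c : α} (hc : c ∈ S) :
    (∀ p ∈ S, ∀ x ∈ S, f (min p x) ≤ f (min c x)) ↔
      (∀ p ∈ S, c < p → f p ≤ f c) ∧ MonotoneOn f (S ∩ Iic c) := by
  constructor
  · intro hmin
    refine ⟨fun p hp hcp => ?_, fun a ha b hb hab => ?_⟩
    · simpa only [min_self, min_eq_left hcp.le] using hmin p hp p hp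
    · simpa only [min_eq_left hab, min_eq_right hb.2] using hmin a ha.1 b hb.1
  · rintro ⟨hright, hmono⟩ p hp x hx
    have hm : min p x ∈ S := min_rec' (· ∈ S) hp hx
    rcases le_or_gt x c with hxc | hcx
    · rw [min_eq_right hxc]
      exact hmono ⟨hm, min_le_of_right_le hxc⟩ ⟨hx, hxc⟩ (min_le_right p x)
    · rw [min_eq_left hcx.le]
      rcases le_or_gt (min p x) c with hmc | hcm
      · exact hmono ⟨hm, hmc⟩ ⟨hc, self_mem_Iic⟩ hmc
      · exact hright _ hm hcm

theorem stmt_5_general [Field 𝕜] [LinearOrder 𝕜] [IsStrictOrderedRing 𝕜] {g φ : α → 𝕜}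
    (hφ : ∀ x ∈ S, 0 < φ x) {c : α} (hc : c ∈ S) :
    (∀ p ∈ S, ∀ x ∈ S, lowerThresholdPayoff g φ p x ≤ lowerThresholdPayoff g φ c x) ↔
      (∀ p ∈ S, c < p → g p / φ p ≤ g c / φ c) ∧
        MonotoneOn (fun p => g p / φ p) (S ∩ Iic c) := by
  rw [← forall_apply_min_le_apply_min_iff (f := fun p => g p / φ p) hc]
  exact forall₄_congr fun p _ x hx => lowerThresholdPayoff_le_iff (hφ x hx) p c

end LowerThreshold

/-- Theorem 2′: necessary and sufficient conditions for optimality of a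
lower-threshold stopping time (the class of `r`-intervals). -/
theorem stmt_5 (I : Set ℝ) (hIopen : IsOpen I) (hIconn : I.OrdConnected)
    (hIne : I.Nonempty)
    (g φ : ℝ → ℝ) (hφpos : ∀ x ∈ I, 0 < φ x) (hφanti : StrictAntiOn φ I)
    (W : ℝ → ℝ → ℝ)
    (hW : ∀ p ∈ I, ∀ x ∈ I, W p x = if p < x then g p * φ x / φ p else g x)
    (hgpos : ∃ x₀ ∈ I, 0 < g x₀)
    (pstar : ℝ) (hpstar : pstar ∈ I) :
    (∀ p ∈ I, ∀ x ∈ I, W p x ≤ W pstar x) ↔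
      ((∀ p ∈ I, pstar < p → g p / φ p ≤ g pstar / φ pstar) ∧
       (∀ p₁ ∈ I, ∀ p₂ ∈ I, p₁ ≤ p₂ → p₂ ≤ pstar → g p₁ / φ p₁ ≤ g p₂ / φ p₂)) := by
  rw [← monotoneOn_inter_Iic_iff (f := fun p => g p / φ p), ← stmt_5_general hφpos hpstar]
  exact forall₄_congr fun p hp x hx => by
    rw [hW p hp x hx, hW pstar hpstar x hx, lowerThresholdPayoff, lowerThresholdPayoff]
end

section
/- Suppose g and ψ are continuously differentiable on I (so h = g/ψ is continuously differentiable), and p* ∈ I satisfies: h'(p*) = 0; h is twice differentiable at p* with h''(p*) < 0 (equivalently H''(p*) > g''(p*) for H = h(p*)ψ); h(x) ≤ h(p*) for all x ∈ (l, p*) (i.e., H(x) ≥ g(x) on (l,p*)); and every other point p̃ ∈ I with h'(p̃) = 0 and p̃ ≠ p* satisfies either (2a) p̃ < p*, or (2b) p̃ > p* and there exists an integer n > 2 such that h is n times differentiable at p̃ with h^{(k)}(p̃) = 0 for k = 1, …, n−1 and h^{(n)}(p̃) < 0. Then h'(p) ≤ 0 for all p ∈ (p*, r), and p* is optimal over the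 class of threshold stopping times, i.e., V(p*;x) ≥ V(p;x) for all p, x ∈ I. -/
open Set

/-!
Writing the threshold value as `V(p; x) = h (max p x) * ψ x` reduces optimality of `p*` to
`h (max p x) ≤ h (max p* x)`, which holds as soon as `h ≤ h p*` to the left of `p*` and `h`
decreases to the right of it. For the latter, at every zero of `h'` in `[p*, r)` the first
non-vanishing derivative of `h'` is negative, so `h'` is negative immediately to the right of that
zero. Being continuous, `h'` therefore never becomes positive after `p*`.
-/

open Filter Topology

theorem le_of_continuousOn_of_frequently_le_right {α β : Type*}
    [ConditionallyCompleteLinearOrder α] [DenselyOrdered α] [TopologicalSpace α] [OrderTopology α]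
    [LinearOrder β] [TopologicalSpace β] [OrderClosedTopology β]
    {f : α → β} {a b : α} {c : β} (hf : ContinuousOn f (Icc a b)) (ha : f a ≤ c)
    (hright : ∀ x ∈ Ico a b, f x = c → ∃ᶠ y in 𝓝[>] x, f y ≤ c) :
    ∀ x ∈ Icc a b, f x ≤ c := by
  have hclosed : IsClosed ({x | f x ≤ c} ∩ Icc a b) := by
    rw [inter_comm]
    exact hf.preimage_isClosed_of_isClosed isClosed_Icc isClosed_Iic
  refine hclosed.Icc_subset_of_forall_exists_gt ha ?_
  rintro x ⟨hxc : f x ≤ c, hx⟩ y (hxy : x < y)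
  have hfreq : ∃ᶠ z in 𝓝[>] x, f z ≤ c := by
    rcases hxc.eq_or_lt with heq | hlt
    · exact hright x hx heq
    · have := nhdsGT_neBot_of_exists_gt ⟨y, hxy⟩
      have hcont : ContinuousWithinAt f (Ioi x) x :=
        (hf x (Ico_subset_Icc_self hx)).mono_of_mem_nhdsWithin
          (mem_of_superset (Ioo_mem_nhdsGT hx.2) fun z hz => ⟨hx.1.trans hz.1.le, hz.2.le⟩)
      exact ((hcont.eventually_lt_const hlt).mono fun _ => le_of_lt).frequently
  exact (hfreq.and_eventually (Ioc_mem_nhdsGT hxy)).exists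

theorem eventually_lt_right_of_deriv_neg {f : ℝ → ℝ} {x : ℝ}
    (hf : ContinuousWithinAt f (Ici x) x) (hderiv : ∀ᶠ y in 𝓝[>] x, deriv f y < 0) :
    ∀ᶠ y in 𝓝[>] x, f y < f x := by
  obtain ⟨b, hxb : x < b, hneg⟩ := mem_nhdsGT_iff_exists_Ioo_subset.1 hderiv
  have hcont : ContinuousOn f (Ico x b) := by
    intro y hy
    rcases hy.1.eq_or_lt with rfl | hxy
    · exact hf.mono Ico_subset_Ici_self
    · exact (differentiableAt_of_deriv_ne_zero
        (hneg ⟨hxy, hy.2⟩).ne).continuousAt.continuousWithinAt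
  have hanti : StrictAntiOn f (Ico x b) :=
    strictAntiOn_of_deriv_neg (convex_Ico x b) hcont fun y hy => hneg (by rwa [interior_Ico] at hy)
  filter_upwards [Ioo_mem_nhdsGT hxb] with y hy
  exact hanti (left_mem_Ico.2 hxb) (Ioo_subset_Ico_self hy) hy.1

/-- `f` is `n` times differentiable at `x` and vanishes there to order exactly `n`, with negative
`n`-th derivative. For `f = h'` and `n ≥ 1` it says that `x` is a stationary point of `h` whose
first non-vanishing derivative, of order `n + 1`, is negative. Differentiability of the lower
derivatives is asked at `x` only: near `x` it follows, `deriv` being `0` where a function is not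
differentiable. -/
structure HasNegLeadingDeriv (f : ℝ → ℝ) (n : ℕ) (x : ℝ) : Prop where
  differentiableAt : ∀ k < n, DifferentiableAt ℝ (iteratedDeriv k f) x
  eq_zero : ∀ k < n, iteratedDeriv k f x = 0
  neg : iteratedDeriv n f x < 0

namespace HasNegLeadingDeriv

variable {f : ℝ → ℝ} {n : ℕ} {x : ℝ}

theorem one_of_deriv_neg (hf : f x = 0) (hderiv : deriv f x < 0) : HasNegLeadingDeriv f 1 x where
  differentiableAt k hk := by
    obtain rfl : k = 0 := by lia
    simpa only [iteratedDeriv_zero] using differentiableAt_of_deriv_ne_zero hderiv.ne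
  eq_zero k hk := by
    obtain rfl : k = 0 := by lia
    simpa only [iteratedDeriv_zero] using hf
  neg := by rwa [iteratedDeriv_one]

theorem deriv_of_contDiffAt (hf : ContDiffAt ℝ (n + 1 : ℕ) f x)
    (hzero : ∀ k, 1 ≤ k → k ≤ n → iteratedDeriv k f x = 0) (hneg : iteratedDeriv (n + 1) f x < 0) :
    HasNegLeadingDeriv (deriv f) n x where
  differentiableAt k hk := by
    rw [← iteratedDeriv_succ', ← iteratedDerivWithin_univ, ← differentiableWithinAt_univ]
    exact hf.contDiffWithinAt.differentiableWithinAt_iteratedDerivWithin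
      (by exact_mod_cast Nat.succ_lt_succ hk) (by simp)
  eq_zero k hk := by
    rw [← iteratedDeriv_succ']
    exact hzero (k + 1) k.succ_pos hk
  neg := by rwa [← iteratedDeriv_succ']

theorem deriv_of_succ (hf : HasNegLeadingDeriv f (n + 1) x) : HasNegLeadingDeriv (deriv f) n x where
  differentiableAt k hk := by
    rw [← iteratedDeriv_succ']
    exact hf.differentiableAt (k + 1) (Nat.succ_lt_succ hk)
  eq_zero k hk := by
    rw [← iteratedDeriv_succ']
    exact hf.eq_zero (k + 1) (Nat.succ_lt_succ hk)
  neg := by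
    rw [← iteratedDeriv_succ']
    exact hf.neg

theorem eventually_neg_right (hf : HasNegLeadingDeriv f (n + 1) x) : ∀ᶠ y in 𝓝[>] x, f y < 0 := by
  induction n generalizing f with
  | zero =>
    have hzero : f x = 0 := hf.eq_zero 0 one_pos
    have hderiv : deriv f x < 0 := iteratedDeriv_one (f := f) ▸ hf.neg
    filter_upwards [(eventually_nhdsWithin_sign_eq_of_deriv_neg hderiv hzero).filter_mono
      nhdsWithin_le_nhds, self_mem_nhdsWithin] with y hsign (hxy : x < y)
    rwa [sign_neg (sub_neg.2 hxy), sign_eq_neg_one_iff] at hsign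
  | succ n ih =>
    have hcont : ContinuousAt f x := (hf.differentiableAt 0 (Nat.succ_pos _)).continuousAt
    have hzero : f x = 0 := hf.eq_zero 0 (Nat.succ_pos _)
    rw [← hzero]
    exact eventually_lt_right_of_deriv_neg hcont.continuousWithinAt (ih hf.deriv_of_succ)

end HasNegLeadingDeriv

theorem antitoneOn_inter_Ici_of_deriv_nonpos {h : ℝ → ℝ} {I : Set ℝ} {c : ℝ}
    (hI : I.OrdConnected) (hh : DifferentiableOn ℝ h I)
    (hderiv : ∀ p ∈ I, c < p → deriv h p ≤ 0) : AntitoneOn h (I ∩ Ici c) := by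
  have hint : interior (I ∩ Ici c) ⊆ I ∩ Ioi c := by
    rw [interior_inter, interior_Ici]
    exact inter_subset_inter_left _ interior_subset
  exact antitoneOn_of_deriv_nonpos (hI.convex.inter (convex_Ici c))
    (hh.continuousOn.mono inter_subset_left) (hh.mono (hint.trans inter_subset_left))
    fun p hp => hderiv p (hint hp).1 (hint hp).2

theorem apply_max_le_apply_max_of_antitoneOn_Ici {α β : Type*} [LinearOrder α] [Preorder β]
    {h : α → β} {s : Set α} {c p x : α} (hc : c ∈ s) (hp : p ∈ s) (hx : x ∈ s)
    (hleft : ∀ y ∈ s, y < c → h y ≤ h c) (hanti : AntitoneOn h (s ∩ Ici c)) :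
    h (max p x) ≤ h (max c x) := by
  have hmem : max p x ∈ s := by rcases max_choice p x with e | e <;> rwa [e]
  rcases le_total x c with hxc | hcx
  · rw [max_eq_left hxc]
    rcases lt_or_ge (max p x) c with hlt | hge
    · exact hleft _ hmem hlt
    · exact hanti ⟨hc, self_mem_Ici⟩ ⟨hmem, hge⟩ hge
  · rw [max_eq_right hcx]
    exact hanti ⟨hx, hcx⟩ ⟨hmem, hcx.trans (le_max_right p x)⟩ (le_max_right p x)

theorem ite_lt_eq_apply_max_mul {α K : Type*} [LinearOrder α] [GroupWithZero K]
    {g ψ h : α → K} {p x : α} (hψ : ψ x ≠ 0) (hh : h x = g x / ψ x) :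
    (if x < p then h p * ψ x else g x) = h (max p x) * ψ x := by
  split_ifs with hlt
  · rw [max_eq_left hlt.le]
  · rw [max_eq_right (not_lt.1 hlt), hh, div_mul_cancel₀ _ hψ]

theorem stmt_8_general {I : Set ℝ} (hIopen : IsOpen I) (hIconn : I.OrdConnected)
    {g ψ h : ℝ → ℝ} (hψpos : ∀ x ∈ I, 0 < ψ x) (hh : ∀ p ∈ I, h p = g p / ψ p)
    (hC1 : ContDiffOn ℝ 1 h I) {V : ℝ → ℝ → ℝ}
    (hV : ∀ p ∈ I, ∀ x ∈ I, V p x = if x < p then h p * ψ x else g x)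
    {pstar : ℝ} (hpstar : pstar ∈ I) (hstat : deriv h pstar = 0)
    (hneg : deriv (deriv h) pstar < 0) (hmaj : ∀ x ∈ I, x < pstar → h x ≤ h pstar)
    (hother : ∀ p ∈ I, pstar < p → deriv h p = 0 →
      ∃ n, HasNegLeadingDeriv (deriv h) (n + 1) p) :
    (∀ p ∈ I, pstar < p → deriv h p ≤ 0) ∧ (∀ p ∈ I, ∀ x ∈ I, V p x ≤ V pstar x) := by
  have hneg_right : ∀ p ∈ I, pstar ≤ p → deriv h p = 0 → ∀ᶠ y in 𝓝[>] p, deriv h y < 0 := by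
    intro p hp hle hzero
    rcases hle.eq_or_lt with rfl | hlt
    · exact (HasNegLeadingDeriv.one_of_deriv_neg hstat hneg).eventually_neg_right
    · obtain ⟨n, hn⟩ := hother p hp hlt hzero
      exact hn.eventually_neg_right
  have hderiv : ∀ p ∈ I, pstar < p → deriv h p ≤ 0 := by
    intro p hp hlt
    have hsub : Icc pstar p ⊆ I := hIconn.out hpstar hp
    have hcont : ContinuousOn (deriv h) (Icc pstar p) :=
      (hC1.continuousOn_deriv_of_isOpen hIopen le_rfl).mono hsub
    refine le_of_continuousOn_of_frequently_le_right hcont hstat.le ?_ p (right_mem_Icc.2 hlt.le)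
    intro x hx hzero
    exact ((hneg_right x (hsub (Ico_subset_Icc_self hx)) hx.1 hzero).mono
      fun _ => le_of_lt).frequently
  have hanti : AntitoneOn h (I ∩ Ici pstar) :=
    antitoneOn_inter_Ici_of_deriv_nonpos hIconn (hC1.differentiableOn one_ne_zero) hderiv
  refine ⟨hderiv, fun p hp x hx => ?_⟩
  have hVmax : ∀ q ∈ I, V q x = h (max q x) * ψ x := fun q hq =>
    (hV q hq x hx).trans (ite_lt_eq_apply_max_mul (hψpos x hx).ne' (hh x hx))
  rw [hVmax p hp, hVmax pstar hpstar]
  exact mul_le_mul_of_nonneg_right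
    (apply_max_le_apply_max_of_antitoneOn_Ici hpstar hp hx hmaj hanti) (hψpos x hx).le

/-- Proposition 2, case 2: free-boundary solution `(H, pstar)` with `H''(pstar) > g''(pstar)`
(i.e. `h'(pstar) = 0`, `h''(pstar) < 0`), with `H ≥ g` on `(l, pstar)`, such that any other
stationary point `p̃` of `h` is either below `pstar`, or above `pstar` with vanishing
derivatives of orders `2, …, n−1` and `h⁽ⁿ⁾(p̃) < 0` for some `n > 2`.  Then `h' ≤ 0` on
`(pstar, r)` and `pstar` is optimal over the class of threshold stopping times. -/
theorem stmt_8 (I : Set ℝ) (hIopen : IsOpen I) (hIconn : I.OrdConnected)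
    (hIne : I.Nonempty)
    (a σ : ℝ → ℝ) (ρ : ℝ) (hρ : 0 < ρ)
    (ha : ContinuousOn a I) (hσ : ContinuousOn σ I) (hσpos : ∀ x ∈ I, 0 < σ x)
    (g ψ : ℝ → ℝ) (hψpos : ∀ x ∈ I, 0 < ψ x) (hψmono : StrictMonoOn ψ I)
    (hψd : ∀ x ∈ I, DifferentiableAt ℝ ψ x)
    (hψd2 : ∀ x ∈ I, DifferentiableAt ℝ (deriv ψ) x)
    (hODE : ∀ x ∈ I, (1/2) * σ x ^ 2 * deriv (deriv ψ) x + a x * deriv ψ x = ρ * ψ x)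
    (hgC1 : ContDiffOn ℝ 1 g I) (hψC1 : ContDiffOn ℝ 1 ψ I)
    (h : ℝ → ℝ) (hh : ∀ p, h p = g p / ψ p)
    (V : ℝ → ℝ → ℝ)
    (hV : ∀ p ∈ I, ∀ x ∈ I, V p x = if x < p then h p * ψ x else g x)
    (pstar : ℝ) (hpstar : pstar ∈ I)
    (hstat : deriv h pstar = 0)
    (h'' : ℝ) (hh'' : HasDerivAt (deriv h) h'' pstar) (hneg : h'' < 0)
    (hmaj : ∀ x ∈ I, x < pstar → h x ≤ h pstar)
    (hother : ∀ pt ∈ I, deriv h pt = 0 → pt ≠ pstar →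
      (pt < pstar ∨
        (pstar < pt ∧ ∃ n : ℕ, 2 < n ∧ ContDiffAt ℝ n h pt ∧
          (∀ k : ℕ, 1 ≤ k → k ≤ n - 1 → iteratedDeriv k h pt = 0) ∧
          iteratedDeriv n h pt < 0))) :
    (∀ p ∈ I, pstar < p → deriv h p ≤ 0) ∧
    (∀ p ∈ I, ∀ x ∈ I, V p x ≤ V pstar x) := by
  have hC1 : ContDiffOn ℝ 1 h I :=
    (hgC1.div hψC1 fun x hx => (hψpos x hx).ne').congr fun x _ => hh x
  refine stmt_8_general hIopen hIconn hψpos (fun p _ => hh p) hC1 hV hpstar hstat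
    (hh''.deriv.trans_lt hneg) hmaj fun p hp hlt hzero => ?_
  obtain ⟨-, n, hn, hcont, hvanish, hlead⟩ :=
    (hother p hp hzero hlt.ne').resolve_left hlt.not_gt
  obtain ⟨m, rfl⟩ : ∃ m, n = m + 2 := ⟨n - 2, by lia⟩
  exact ⟨m, .deriv_of_contDiffAt hcont hvanish hlead⟩
end

section
/- For every δ > 0, h_δ is differentiable on (0,∞) with h_δ'(p) = (p−1)²·p^{−δ−1}·((3−δ)p + δ) for all p > 0. Consequently, if 0 < δ ≤ 3 then h_δ'(p) ≥ 0 for all p > 0 and h_δ'(p) = 0 if and only if p = 1; i.e., for 0 < δ ≤ 3 the free-boundary problem has the unique solution (H, p̄) = (x ↦ x^δ, 1). -/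
open Set Real

/-! In the derivative of `(x - a) ^ (n + 1) * x ^ s` one can factor out `(x - a) ^ n * x ^ (s - 1)`,
which leaves the affine function `(n + 1 + s) * x - a * s`. For `a > 0` and `-(n + 1) ≤ s < 0` this
function is positive at `0` and nondecreasing, so on `(0, ∞)` the sign and the zeros of the
derivative are those of `(x - a) ^ n`. -/

section PowMulRpow

variable {a s x : ℝ} {n : ℕ}

theorem hasDerivAt_sub_pow_mul_rpow (a s : ℝ) (n : ℕ) (hx : x ≠ 0) :
    HasDerivAt (fun y ↦ (y - a) ^ (n + 1) * y ^ s)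
      ((x - a) ^ n * x ^ (s - 1) * ((n + 1 + s) * x - a * s)) x := by
  have hasDerivAt_pow : HasDerivAt (fun y ↦ (y - a) ^ (n + 1)) ((n + 1) * (x - a) ^ n) x := by
    simpa using ((hasDerivAt_id x).sub_const a).fun_pow (n + 1)
  have hasDerivAt_rpow : HasDerivAt (fun y ↦ y ^ s) (s * x ^ (s - 1)) x :=
    hasDerivAt_rpow_const (.inl hx)
  have rpow_eq : x ^ s = x ^ (s - 1) * x := by
    rw [← rpow_add_one hx, sub_add_cancel]
  refine (hasDerivAt_pow.mul hasDerivAt_rpow).congr_deriv ?_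
  rw [rpow_eq]
  ring

theorem mul_sub_mul_pos_of_neg {c : ℝ} (ha : 0 < a) (hs : s < 0) (hc : 0 ≤ c) (hx : 0 ≤ x) :
    0 < c * x - a * s :=
  sub_pos.2 ((mul_neg_of_pos_of_neg ha hs).trans_le (mul_nonneg hc hx))

theorem deriv_sub_pow_mul_rpow_nonneg (ha : 0 < a) (hs : s < 0) (hns : 0 ≤ n + 1 + s)
    (hn : Even n) (hx : 0 < x) :
    0 ≤ deriv (fun y ↦ (y - a) ^ (n + 1) * y ^ s) x := by
  rw [(hasDerivAt_sub_pow_mul_rpow a s n hx.ne').deriv]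
  exact mul_nonneg (mul_nonneg (hn.pow_nonneg _) (rpow_nonneg hx.le _))
    (mul_sub_mul_pos_of_neg ha hs hns hx.le).le

theorem deriv_sub_pow_mul_rpow_eq_zero_iff (ha : 0 < a) (hs : s < 0) (hns : 0 ≤ n + 1 + s)
    (hn : n ≠ 0) (hx : 0 < x) :
    deriv (fun y ↦ (y - a) ^ (n + 1) * y ^ s) x = 0 ↔ x = a := by
  have rpow_ne_zero : x ^ (s - 1) ≠ 0 := (rpow_pos_of_pos hx _).ne'
  have affine_ne_zero : (n + 1 + s) * x - a * s ≠ 0 :=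
    (mul_sub_mul_pos_of_neg ha hs hns hx.le).ne'
  rw [(hasDerivAt_sub_pow_mul_rpow a s n hx.ne').deriv, mul_eq_zero_iff_right affine_ne_zero,
    mul_eq_zero_iff_right rpow_ne_zero, pow_eq_zero_iff hn, sub_eq_zero]

end PowMulRpow

/-- For the example `h_δ(p) = 1 + (p−1)³ p^{−δ}`: the derivative is
`h_δ'(p) = (p−1)²·p^{−δ−1}·((3−δ)p + δ)` on `(0, ∞)`; hence for `0 < δ ≤ 3` the
derivative is nonnegative on `(0, ∞)` and vanishes exactly at `p = 1` (so the
free-boundary problem has the unique solution `p̄ = 1`). -/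
theorem stmt_11 (δ : ℝ) (hδ : 0 < δ) (h : ℝ → ℝ)
    (hh : ∀ p : ℝ, h p = 1 + (p - 1) ^ 3 * p ^ (-δ)) :
    (∀ p : ℝ, 0 < p →
      HasDerivAt h ((p - 1) ^ 2 * p ^ (-δ - 1) * ((3 - δ) * p + δ)) p) ∧
    (δ ≤ 3 → ∀ p : ℝ, 0 < p → 0 ≤ deriv h p ∧ (deriv h p = 0 ↔ p = 1)) := by
  obtain rfl : h = fun p ↦ 1 + (p - 1) ^ 3 * p ^ (-δ) := funext hh
  refine ⟨fun p hp ↦ ?_, fun hδ3 p hp ↦ ?_⟩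
  · refine ((hasDerivAt_sub_pow_mul_rpow 1 (-δ) 2 hp.ne').const_add 1).congr_deriv ?_
    push_cast
    ring
  · have neg_δ_neg : -δ < 0 := neg_neg_of_pos hδ
    have slope_nonneg : 0 ≤ ((2 : ℕ) : ℝ) + 1 + -δ := by
      push_cast
      linarith
    rw [deriv_const_add]
    exact ⟨deriv_sub_pow_mul_rpow_nonneg one_pos neg_δ_neg slope_nonneg even_two hp,
      deriv_sub_pow_mul_rpow_eq_zero_iff one_pos neg_δ_neg slope_nonneg two_ne_zero hp⟩
end

section
/- If 0 < δ < 3, then h_δ(p) → +∞ as p → +∞, so sup_{p>0} h_δ(p) = +∞ (hence the threshold stopping time τ₁ corresponding to the unique free-boundary solution p̄ = 1 is not optimal: V(p;x) = h_δ(p)x^δ → ∞ as p → ∞ for every x > 0). If δ = 3, then h_3(p) < 2 for every p > 0 and h_3(p) → 2 as p → +∞, so sup_{p>0} h_3(p) = 2 and the supremum is not attained (V(p;x) ↑ 2x³ for every x > 0). -/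
open Set Real Filter

/-!
For `p > 0` the fraction `(p - 1) ^ n / p ^ δ` equals `(1 - 1 / p) ^ n * p ^ (n - δ)`, whose first
factor tends to `1`. So it diverges with `p ^ (n - δ)` when `δ < n`. When `δ = n` only the first
factor remains, and for odd `n` it stays strictly below its limit `1`, since `1 - 1 / p < 1` and odd
powers are strictly increasing on all of `ℝ`, so that `p < 1`, where the base is negative, needs no
separate treatment.
-/

section SubOnePowMulRpow

variable {n : ℕ} {δ p : ℝ}

theorem sub_one_pow_mul_rpow_neg (hp : 0 < p) :
    (p - 1) ^ n * p ^ (-δ) = (1 - p⁻¹) ^ n * p ^ (n - δ) := by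
  have sub_one_eq : p - 1 = (1 - p⁻¹) * p := by field_simp
  rw [sub_one_eq, mul_pow, sub_eq_add_neg (n : ℝ), rpow_add hp, rpow_natCast, mul_assoc]

theorem sub_one_pow_mul_rpow_neg_natCast (hp : 0 < p) :
    (p - 1) ^ n * p ^ (-n : ℝ) = (1 - p⁻¹) ^ n := by
  rw [sub_one_pow_mul_rpow_neg hp, sub_self, rpow_zero, mul_one]

theorem tendsto_one_sub_inv_pow_atTop (n : ℕ) :
    Tendsto (fun p : ℝ => (1 - p⁻¹) ^ n) atTop (nhds 1) := by
  simpa using (tendsto_inv_atTop_zero (𝕜 := ℝ)).const_sub 1 |>.pow n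

theorem tendsto_sub_one_pow_mul_rpow_neg_atTop (hδ : δ < n) :
    Tendsto (fun p : ℝ => (p - 1) ^ n * p ^ (-δ)) atTop atTop := by
  have rpow_atTop : Tendsto (fun p : ℝ => p ^ (n - δ)) atTop atTop :=
    tendsto_rpow_atTop (sub_pos.mpr hδ)
  refine ((tendsto_one_sub_inv_pow_atTop n).pos_mul_atTop one_pos rpow_atTop).congr' ?_
  filter_upwards [eventually_gt_atTop 0] with p hp
  exact (sub_one_pow_mul_rpow_neg hp).symm

theorem tendsto_sub_one_pow_mul_rpow_neg_natCast (n : ℕ) :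
    Tendsto (fun p : ℝ => (p - 1) ^ n * p ^ (-n : ℝ)) atTop (nhds 1) := by
  refine (tendsto_one_sub_inv_pow_atTop n).congr' ?_
  filter_upwards [eventually_gt_atTop 0] with p hp
  exact (sub_one_pow_mul_rpow_neg_natCast hp).symm

theorem sub_one_pow_mul_rpow_neg_natCast_lt_one (hn : Odd n) (hp : 0 < p) :
    (p - 1) ^ n * p ^ (-n : ℝ) < 1 :=
  calc (p - 1) ^ n * p ^ (-n : ℝ) = (1 - p⁻¹) ^ n := sub_one_pow_mul_rpow_neg_natCast hp
    _ < 1 ^ n := hn.strictMono_pow (sub_lt_self 1 (inv_pos.mpr hp))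
    _ = 1 := one_pow n

end SubOnePowMulRpow

theorem isLUB_image_of_tendsto {α β : Type*} [TopologicalSpace β] [Preorder β]
    [ClosedIicTopology β] {l : Filter α} [l.NeBot] {f : α → β} {s : Set α} {b : β}
    (hs : s ∈ l) (hb : ∀ a ∈ s, f a ≤ b) (hf : Tendsto f l (nhds b)) : IsLUB (f '' s) b :=
  ⟨forall_mem_image.mpr hb, fun _ hc =>
    le_of_tendsto hf (mem_of_superset hs fun _ ha => hc (mem_image_of_mem f ha))⟩

theorem stmt_12_general (n : ℕ) (δ : ℝ) (h : ℝ → ℝ)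
    (hh : ∀ p : ℝ, h p = 1 + (p - 1) ^ n * p ^ (-δ)) :
    (δ < n → Tendsto h atTop atTop ∧
      ∀ x : ℝ, 0 < x → Tendsto (fun p => h p * x ^ δ) atTop atTop) ∧
    (Odd n → δ = n → (∀ p : ℝ, 0 < p → h p < 2) ∧
      Tendsto h atTop (nhds 2) ∧
      IsLUB (h '' Set.Ioi (0 : ℝ)) 2 ∧ 2 ∉ h '' Set.Ioi (0 : ℝ)) := by
  obtain rfl : h = fun p => 1 + (p - 1) ^ n * p ^ (-δ) := funext hh
  constructor
  · intro hδ
    have tendsto_h := tendsto_atTop_add_const_left _ 1 (tendsto_sub_one_pow_mul_rpow_neg_atTop hδ)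
    exact ⟨tendsto_h, fun x hx => tendsto_h.atTop_mul_const (rpow_pos_of_pos hx δ)⟩
  · rintro hn rfl
    have h_lt_two (p : ℝ) (hp : 0 < p) : 1 + (p - 1) ^ n * p ^ (-n : ℝ) < 2 := by
      linarith [sub_one_pow_mul_rpow_neg_natCast_lt_one hn hp]
    have tendsto_h : Tendsto (fun p : ℝ => 1 + (p - 1) ^ n * p ^ (-n : ℝ)) atTop (nhds 2) := by
      simpa only [one_add_one_eq_two] using
        (tendsto_sub_one_pow_mul_rpow_neg_natCast n).const_add 1
    refine ⟨h_lt_two, tendsto_h, ?_, ?_⟩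
    · exact isLUB_image_of_tendsto (Ioi_mem_atTop 0) (fun p hp => (h_lt_two p hp).le) tendsto_h
    · rintro ⟨p, hp, h_eq_two⟩
      exact (h_lt_two p hp).ne h_eq_two

/-- For `0 < δ < 3`, `h_δ(p) → +∞` as `p → ∞` (so the stopping time corresponding to the
free-boundary point `p̄ = 1` is not optimal: `V(p;x) = h_δ(p)x^δ → ∞` for every `x > 0`);
for `δ = 3`, `h_3 < 2` on `(0, ∞)` and `h_3(p) → 2`, so `sup h_3 = 2` is not attained. -/
theorem stmt_12 (δ : ℝ) (hδ : 0 < δ) (h : ℝ → ℝ)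
    (hh : ∀ p : ℝ, h p = 1 + (p - 1) ^ 3 * p ^ (-δ)) :
    (δ < 3 → Tendsto h atTop atTop ∧
      ∀ x : ℝ, 0 < x → Tendsto (fun p => h p * x ^ δ) atTop atTop) ∧
    (δ = 3 → (∀ p : ℝ, 0 < p → h p < 2) ∧
      Tendsto h atTop (nhds 2) ∧
      IsLUB (h '' Set.Ioi (0 : ℝ)) 2 ∧ 2 ∉ h '' Set.Ioi (0 : ℝ)) := by
  obtain ⟨subcritical, critical⟩ := stmt_12_general 3 δ h hh
  exact ⟨mod_cast subcritical, mod_cast critical (by decide)⟩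
end

section
/- If δ > 3, then the set of points p > 0 with h_δ'(p) = 0 is exactly {1, δ/(δ−3)}; i.e., for δ > 3 the free-boundary problem has exactly two solutions, (x ↦ x^δ, 1) and (x ↦ h_δ(p_δ)x^δ, p_δ) with p_δ = δ/(δ−3). -/
open Set Real

section ShiftedPowerMulRpow

variable {n : ℕ} {x : ℝ} (a c δ : ℝ)

theorem hasDerivAt_const_add_sub_pow_mul_rpow_neg (hn : n ≠ 0) (hx : x ≠ 0) :
    HasDerivAt (fun y : ℝ => c + (y - a) ^ n * y ^ (-δ))
      ((x - a) ^ (n - 1) * x ^ (-δ - 1) * (δ * a - (δ - n) * x)) x := by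
  have hpow : HasDerivAt (fun y : ℝ => (y - a) ^ n) (n * (x - a) ^ (n - 1)) x := by
    simpa using ((hasDerivAt_id x).sub_const a).fun_pow n
  have hrpow : HasDerivAt (fun y : ℝ => y ^ (-δ)) (-δ * x ^ (-δ - 1)) x :=
    hasDerivAt_rpow_const (.inl hx)
  have rpow_split : x ^ (-δ) = x ^ (-δ - 1) * x := by
    rw [← rpow_add_one hx, sub_add_cancel]
  refine ((hpow.mul hrpow).const_add c).congr_deriv ?_
  rw [rpow_split, ← pow_sub_one_mul hn (x - a)]
  ring

theorem deriv_const_add_sub_pow_mul_rpow_neg_eq_zero_iff (hn : 1 < n) (hx : 0 < x) :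
    deriv (fun y : ℝ => c + (y - a) ^ n * y ^ (-δ)) x = 0 ↔
      x = a ∨ (δ - n) * x = δ * a := by
  have rpow_factor_ne_zero : x ^ (-δ - 1) ≠ 0 := (rpow_pos_of_pos hx _).ne'
  rw [(hasDerivAt_const_add_sub_pow_mul_rpow_neg a c δ (by lia) hx.ne').deriv,
    mul_eq_zero, mul_eq_zero_iff_right rpow_factor_ne_zero, pow_eq_zero_iff (by lia),
    sub_eq_zero, sub_eq_zero, eq_comm (a := δ * a)]

end ShiftedPowerMulRpow

theorem stmt_13_general {n : ℕ} (hn : 1 < n) {a : ℝ} (ha : 0 < a) (c : ℝ) {δ : ℝ}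
    (hδ : δ < 0 ∨ n < δ) :
    {x : ℝ | 0 < x ∧ deriv (fun y : ℝ => c + (y - a) ^ n * y ^ (-δ)) x = 0} =
      {a, δ * a / (δ - n)} := by
  have n_nonneg : (0 : ℝ) ≤ n := n.cast_nonneg
  have δ_sub_n_ne_zero : δ - n ≠ 0 := by
    rcases hδ with δ_neg | n_lt_δ <;> intro <;> linarith
  have root_pos : 0 < δ * a / (δ - n) := by
    rcases hδ with δ_neg | n_lt_δ
    · exact div_pos_of_neg_of_neg (mul_neg_of_neg_of_pos δ_neg ha) (by linarith)
    · exact div_pos (mul_pos (n_nonneg.trans_lt n_lt_δ) ha) (sub_pos.mpr n_lt_δ)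
  have critical_iff {x : ℝ} (hx : 0 < x) :
      deriv (fun y : ℝ => c + (y - a) ^ n * y ^ (-δ)) x = 0 ↔ x = a ∨ x = δ * a / (δ - n) := by
    rw [deriv_const_add_sub_pow_mul_rpow_neg_eq_zero_iff a c δ hn hx,
      eq_div_iff δ_sub_n_ne_zero, mul_comm x]
  ext x
  refine ⟨fun ⟨hx, hderiv⟩ => (critical_iff hx).mp hderiv, fun hmem => ?_⟩
  have hx : 0 < x := by
    rcases hmem with rfl | rfl
    exacts [ha, root_pos]
  exact ⟨hx, (critical_iff hx).mpr hmem⟩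

/-- For `δ > 3`, the stationary points of `h_δ(p) = 1 + (p−1)³ p^{−δ}` on `(0, ∞)` are
exactly `{1, δ/(δ−3)}`: the free-boundary problem has exactly these two solutions. -/
theorem stmt_13 (δ : ℝ) (hδ : 3 < δ) (h : ℝ → ℝ)
    (hh : ∀ p : ℝ, h p = 1 + (p - 1) ^ 3 * p ^ (-δ)) :
    {p : ℝ | 0 < p ∧ deriv h p = 0} = {1, δ / (δ - 3)} := by
  obtain rfl : h = fun p => 1 + (p - 1) ^ 3 * p ^ (-δ) := funext hh
  simpa using stmt_13_general (n := 3) (by simp) one_pos 1 (.inr (mod_cast hδ))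
end

section
/- If δ > 3, then with p_δ = δ/(δ−3): h_δ'(p) ≥ 0 for all p ∈ (0, p_δ] and h_δ'(p) ≤ 0 for all p ∈ [p_δ, ∞); hence h_δ attains its global maximum over (0,∞) at p_δ, and in particular h_δ(p_δ) > h_δ(1) = 1 (so the free-boundary solution with boundary point 1 does not solve the optimal stopping problem, while the threshold p_δ is optimal over the class of threshold stopping times). -/
open Set Real

/-!
By the product rule, the derivative of `(p - 1) ^ n * p ^ (-δ)` is
`(p - 1) ^ (n - 1) * p ^ (-δ - 1) * (δ - (δ - n) * p)`. For odd `n` the first two factors are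
nonnegative on `(0, ∞)`, so the sign is that of the affine factor, which changes once, from plus
to minus, at `δ / (δ - n)`.
-/

/-- The payoff `(p - 1) ^ n + p ^ δ` at `p > 0` divided by the increasing fundamental solution
`p ^ δ`. Started from `x ≤ p`, stopping on first reaching `p` is worth `x ^ δ` times this ratio,
so an optimal threshold is a maximizer. The function `h_δ` is the case `n = 3`. -/
noncomputable def payoffRatio (n : ℕ) (δ p : ℝ) : ℝ :=
  1 + (p - 1) ^ n * p ^ (-δ)

/-- The critical point `p_δ = δ / (δ - n)` of `payoffRatio n δ`, for `n < δ`. -/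
noncomputable def optimalThreshold (n : ℕ) (δ : ℝ) : ℝ :=
  δ / (δ - n)

section

variable {n : ℕ} {δ p : ℝ}

theorem payoffRatio_one (hn : n ≠ 0) : payoffRatio n δ 1 = 1 := by
  simp [payoffRatio, hn]

theorem one_lt_payoffRatio (hp : 1 < p) : 1 < payoffRatio n δ p := by
  have : 0 < p - 1 := sub_pos.2 hp
  exact lt_add_of_pos_right 1 (by positivity)

theorem one_lt_optimalThreshold (hn : n ≠ 0) (hδ : n < δ) : 1 < optimalThreshold n δ := by
  have : (0 : ℝ) < n := by positivity
  rw [optimalThreshold, one_lt_div (sub_pos.2 hδ)]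
  linarith

theorem hasDerivAt_payoffRatio (hn : n ≠ 0) (hp : 0 < p) :
    HasDerivAt (payoffRatio n δ) ((p - 1) ^ (n - 1) * p ^ (-δ - 1) * (δ - (δ - n) * p)) p := by
  have hasDerivAt_pow : HasDerivAt (fun x : ℝ ↦ (x - 1) ^ n) (n * (p - 1) ^ (n - 1)) p := by
    simpa using ((hasDerivAt_id' p).sub_const 1).fun_pow n
  have hasDerivAt_rpow : HasDerivAt (fun x : ℝ ↦ x ^ (-δ)) (-δ * p ^ (-δ - 1)) p :=
    hasDerivAt_rpow_const (Or.inl hp.ne')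
  have rpow_split : p ^ (-δ) = p ^ (-δ - 1) * p := by
    rw [← rpow_add_one hp.ne', sub_add_cancel]
  have pow_split : (p - 1) ^ n = (p - 1) ^ (n - 1) * (p - 1) := (pow_sub_one_mul hn _).symm
  refine ((hasDerivAt_pow.mul hasDerivAt_rpow).const_add 1).congr_deriv ?_
  rw [rpow_split, pow_split]
  ring

theorem differentiableOn_payoffRatio (hn : n ≠ 0) :
    DifferentiableOn ℝ (payoffRatio n δ) (Ioi 0) :=
  fun _ hp ↦ (hasDerivAt_payoffRatio hn hp).differentiableAt.differentiableWithinAt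

theorem deriv_payoffRatio_nonneg (hn : Odd n) (hδ : n < δ) (hp : 0 < p)
    (hle : p ≤ optimalThreshold n δ) : 0 ≤ deriv (payoffRatio n δ) p := by
  have affine_nonneg : 0 ≤ δ - (δ - n) * p := by
    rw [optimalThreshold, le_div_iff₀' (sub_pos.2 hδ)] at hle
    exact sub_nonneg.2 hle
  have even_pow_nonneg : 0 ≤ (p - 1) ^ (n - 1) := (Nat.Odd.sub_odd hn odd_one).pow_nonneg _
  rw [(hasDerivAt_payoffRatio hn.pos.ne' hp).deriv]
  positivity

theorem deriv_payoffRatio_nonpos (hn : Odd n) (hδ : n < δ) (hle : optimalThreshold n δ ≤ p) :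
    deriv (payoffRatio n δ) p ≤ 0 := by
  have hp : 0 < p := by linarith [one_lt_optimalThreshold hn.pos.ne' hδ]
  have affine_nonpos : δ - (δ - n) * p ≤ 0 := by
    rw [optimalThreshold, div_le_iff₀' (sub_pos.2 hδ)] at hle
    exact sub_nonpos.2 hle
  have even_pow_nonneg : 0 ≤ (p - 1) ^ (n - 1) := (Nat.Odd.sub_odd hn odd_one).pow_nonneg _
  rw [(hasDerivAt_payoffRatio hn.pos.ne' hp).deriv]
  exact mul_nonpos_of_nonneg_of_nonpos (by positivity) affine_nonpos

theorem isMaxOn_payoffRatio (hn : Odd n) (hδ : n < δ) :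
    IsMaxOn (payoffRatio n δ) (Ioi 0) (optimalThreshold n δ) := by
  have threshold_pos : 0 < optimalThreshold n δ :=
    zero_lt_one.trans (one_lt_optimalThreshold hn.pos.ne' hδ)
  have differentiableOn := differentiableOn_payoffRatio (δ := δ) hn.pos.ne'
  exact isMaxOn_Ioi_of_deriv (hasDerivAt_payoffRatio hn.pos.ne' threshold_pos).continuousAt
    (differentiableOn.mono Ioo_subset_Ioi_self)
    (differentiableOn.mono (Ioi_subset_Ioi threshold_pos.le))
    (fun _ hp ↦ deriv_payoffRatio_nonneg hn hδ hp.1 hp.2.le)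
    (fun _ hp ↦ deriv_payoffRatio_nonpos hn hδ hp.le)

theorem stmt_14_general (hn : Odd n) (hδ : n < δ) :
    (∀ p : ℝ, 0 < p → p ≤ optimalThreshold n δ → 0 ≤ deriv (payoffRatio n δ) p) ∧
    (∀ p : ℝ, optimalThreshold n δ ≤ p → deriv (payoffRatio n δ) p ≤ 0) ∧
    (∀ p : ℝ, 0 < p → payoffRatio n δ p ≤ payoffRatio n δ (optimalThreshold n δ)) ∧
    payoffRatio n δ 1 = 1 ∧ 1 < payoffRatio n δ (optimalThreshold n δ) :=
  ⟨fun _ ↦ deriv_payoffRatio_nonneg hn hδ,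
    fun _ ↦ deriv_payoffRatio_nonpos hn hδ,
    fun _ hp ↦ isMaxOn_payoffRatio hn hδ hp,
    payoffRatio_one hn.pos.ne',
    one_lt_payoffRatio (one_lt_optimalThreshold hn.pos.ne' hδ)⟩

end

/-- For `δ > 3` and `p_δ = δ/(δ−3)`: `h_δ' ≥ 0` on `(0, p_δ]` and `h_δ' ≤ 0` on
`[p_δ, ∞)`, so `h_δ` attains its global maximum over `(0, ∞)` at `p_δ`; in particular
`h_δ(p_δ) > h_δ(1) = 1` (so the free-boundary solution with boundary `1` does not solve
the optimal stopping problem, while the threshold `p_δ` is optimal). -/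
theorem stmt_14 (δ : ℝ) (hδ : 3 < δ) (h : ℝ → ℝ)
    (hh : ∀ p : ℝ, h p = 1 + (p - 1) ^ 3 * p ^ (-δ)) :
    (∀ p : ℝ, 0 < p → p ≤ δ / (δ - 3) → 0 ≤ deriv h p) ∧
    (∀ p : ℝ, δ / (δ - 3) ≤ p → deriv h p ≤ 0) ∧
    (∀ p : ℝ, 0 < p → h p ≤ h (δ / (δ - 3))) ∧
    h 1 = 1 ∧ 1 < h (δ / (δ - 3)) := by
  obtain rfl : h = payoffRatio 3 δ := funext hh
  exact stmt_14_general (n := 3) (by decide) hδ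
end

section
/- If δ > 3, then for every x > δ/(δ−3) the payoff g_δ satisfies Lg_δ(x) − ρg_δ(x) = (x−1)·((9/2)x² − (3/2)x − (δ²/2)(x−1)²) ≤ −(9/2)·δ/(δ−3)² < 0; that is, (1/2)x²g_δ''(x) + (1/2)x g_δ'(x) − (δ²/2)g_δ(x) is bounded above by the strictly negative constant −(9/2)δ/(δ−3)² on (δ/(δ−3), ∞). (The paper asserts this negativity with the bound −(3/2)δ/(δ−3); it is the key inequality showing that the threshold p_δ = δ/(δ−3) is optimal over all stopping times.) -/
open Set Real

/-!
For `x > 0` the power `x ^ a` is an eigenfunction of the generator `L` with eigenvalue `a² / 2`, so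
`L - δ² / 2` annihilates the summand `x ^ δ` of the payoff and only `(x - 1)³` contributes. Past the
threshold `p = δ / (δ - 3)` one has `3 x ≤ δ (x - 1)`, so the discounting term absorbs `(9 / 2) x²`
and leaves at most `-(3 / 2) x (x - 1)`. As `p > 1`, this is decreasing beyond `p`, and its value at
`p` is the stated constant.
-/

/-- The generator `L` of the geometric Brownian motion `x * exp w_t`, with `w` a standard Wiener
process, applied to `f` at the point `x`. It is expressed through `deriv`, hence is meaningful only
where `f` is twice differentiable. -/
noncomputable def gbmGenerator (f : ℝ → ℝ) (x : ℝ) : ℝ :=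
  (1/2) * x ^ 2 * deriv (deriv f) x + (1/2) * x * deriv f x

section Generator

variable {f h : ℝ → ℝ} {x : ℝ}

theorem gbmGenerator_fun_add (hf : ContDiffAt ℝ 2 f x) (hh : ContDiffAt ℝ 2 h x) :
    gbmGenerator (fun y ↦ f y + h y) x = gbmGenerator f x + gbmGenerator h x := by
  have deriv_eq : deriv (fun y ↦ f y + h y) x = deriv f x + deriv h x :=
    deriv_fun_add (hf.differentiableAt two_ne_zero) (hh.differentiableAt two_ne_zero)
  have deriv_deriv_eq : deriv (deriv fun y ↦ f y + h y) x
      = deriv (deriv f) x + deriv (deriv h) x := by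
    simpa only [iteratedDeriv_succ, iteratedDeriv_zero] using iteratedDeriv_fun_add hf hh
  simp only [gbmGenerator, deriv_eq, deriv_deriv_eq]
  ring

theorem gbmGenerator_rpow (hx : x ≠ 0) (a : ℝ) :
    gbmGenerator (fun y ↦ y ^ a) x = a ^ 2 / 2 * x ^ a := by
  simp only [gbmGenerator, deriv_rpow_const', deriv_const_mul_field', rpow_sub_one hx]
  field_simp
  ring

theorem gbmGenerator_sub_pow (c : ℝ) (n : ℕ) :
    gbmGenerator (fun y ↦ (y - c) ^ (n + 2)) x
      = (n + 2) / 2 * x * (x - c) ^ n * ((n + 2) * x - c) := by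
  have deriv_sub_pow : ∀ m : ℕ,
      deriv (fun y ↦ (y - c) ^ (m + 1)) = fun y ↦ (m + 1) * (y - c) ^ m := by
    intro m
    ext y
    simp
  simp only [gbmGenerator, deriv_sub_pow, deriv_const_mul_field']
  push_cast
  ring

theorem gbmGenerator_add_rpow_sub_discount (hf : ContDiffAt ℝ 2 f x) (hx : x ≠ 0) (a : ℝ) :
    gbmGenerator (fun y ↦ f y + y ^ a) x - a ^ 2 / 2 * (f x + x ^ a)
      = gbmGenerator f x - a ^ 2 / 2 * f x := by
  rw [gbmGenerator_fun_add hf (contDiffAt_rpow_const_of_ne hx), gbmGenerator_rpow hx]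
  ring

theorem gbmGenerator_sub_pow_add_rpow_sub_discount (hx : x ≠ 0) (c a : ℝ) (n : ℕ) :
    gbmGenerator (fun y ↦ (y - c) ^ (n + 2) + y ^ a) x - a ^ 2 / 2 * ((x - c) ^ (n + 2) + x ^ a)
      = (x - c) ^ n *
        ((n + 2) ^ 2 / 2 * x ^ 2 - (n + 2) / 2 * c * x - a ^ 2 / 2 * (x - c) ^ 2) := by
  have contDiffAt_sub_pow : ContDiffAt ℝ 2 (fun y ↦ (y - c) ^ (n + 2)) x := by fun_prop
  rw [gbmGenerator_add_rpow_sub_discount contDiffAt_sub_pow hx, gbmGenerator_sub_pow]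
  ring

end Generator

section Threshold

variable {k δ x : ℝ}

theorem one_lt_div_sub_self (hk : 0 < k) (hkδ : k < δ) : 1 < δ / (δ - k) :=
  (one_lt_div (sub_pos.2 hkδ)).2 (sub_lt_self δ hk)

theorem mul_le_mul_sub_one_of_div_sub_le (hkδ : k < δ) (hx : δ / (δ - k) ≤ x) :
    k * x ≤ δ * (x - 1) := by
  have threshold_cleared : δ ≤ x * (δ - k) := (div_le_iff₀ (sub_pos.2 hkδ)).1 hx
  linarith

theorem mul_sub_one_le_mul_sub_one {p : ℝ} (hp : 1 ≤ p) (hpx : p ≤ x) :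
    p * (p - 1) ≤ x * (x - 1) :=
  mul_le_mul hpx (sub_le_sub_right hpx 1) (sub_nonneg.2 hp) (by linarith)

theorem div_sub_mul_div_sub_sub_one (hkδ : k ≠ δ) :
    δ / (δ - k) * (δ / (δ - k) - 1) = k * δ / (δ - k) ^ 2 := by
  have hδk : δ - k ≠ 0 := sub_ne_zero.2 hkδ.symm
  field_simp
  ring

theorem sub_one_mul_quadratic_le_of_div_sub_le (hk : 0 < k) (hkδ : k < δ) (hx : δ / (δ - k) ≤ x) :
    (x - 1) * (k ^ 2 / 2 * x ^ 2 - k / 2 * x - δ ^ 2 / 2 * (x - 1) ^ 2)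
      ≤ -(k ^ 2 / 2 * δ / (δ - k) ^ 2) := by
  have one_lt_threshold : 1 < δ / (δ - k) := one_lt_div_sub_self hk hkδ
  have one_lt_x : 1 < x := one_lt_threshold.trans_le hx
  have sq_mul_le : (k * x) ^ 2 ≤ (δ * (x - 1)) ^ 2 :=
    pow_le_pow_left₀ (by positivity) (mul_le_mul_sub_one_of_div_sub_le hkδ hx) 2
  calc (x - 1) * (k ^ 2 / 2 * x ^ 2 - k / 2 * x - δ ^ 2 / 2 * (x - 1) ^ 2)
      ≤ (x - 1) * -(k / 2 * x) :=
        mul_le_mul_of_nonneg_left (by linarith) (sub_nonneg.2 one_lt_x.le)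
    _ = -(k / 2 * (x * (x - 1))) := by ring
    _ ≤ -(k / 2 * (δ / (δ - k) * (δ / (δ - k) - 1))) := by
        gcongr -(k / 2 * ?_)
        exact mul_sub_one_le_mul_sub_one one_lt_threshold.le hx
    _ = -(k ^ 2 / 2 * δ / (δ - k) ^ 2) := by
        rw [div_sub_mul_div_sub_sub_one hkδ.ne]
        ring

end Threshold

/-- For `δ > 3` and `x > δ/(δ−3)`, with `g_δ(x) = (x−1)³ + x^δ` and `ρ = δ²/2`:
`Lg_δ(x) − ρ g_δ(x) = (x−1)·((9/2)x² − (3/2)x − (δ²/2)(x−1)²)`, and this quantity is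
bounded above by the strictly negative constant `−(9/2)·δ/(δ−3)²`. -/
theorem stmt_15 (δ : ℝ) (hδ : 3 < δ) (g : ℝ → ℝ)
    (hg : ∀ x : ℝ, g x = (x - 1) ^ 3 + x ^ δ) :
    ∀ x : ℝ, δ / (δ - 3) < x →
      (1/2) * x ^ 2 * deriv (deriv g) x + (1/2) * x * deriv g x - δ ^ 2 / 2 * g x
        = (x - 1) * ((9/2) * x ^ 2 - (3/2) * x - δ ^ 2 / 2 * (x - 1) ^ 2) ∧
      (x - 1) * ((9/2) * x ^ 2 - (3/2) * x - δ ^ 2 / 2 * (x - 1) ^ 2)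
        ≤ -((9/2) * δ / (δ - 3) ^ 2) ∧
      -((9/2) * δ / (δ - 3) ^ 2) < 0 := by
  obtain rfl : g = fun x ↦ (x - 1) ^ 3 + x ^ δ := funext hg
  intro x hx
  have one_lt_threshold : 1 < δ / (δ - 3) := one_lt_div_sub_self three_pos hδ
  have x_ne_zero : x ≠ 0 := (one_pos.trans (one_lt_threshold.trans hx)).ne'
  refine ⟨?_, ?_, ?_⟩
  · calc _ = gbmGenerator (fun y ↦ (y - 1) ^ (1 + 2) + y ^ δ) x
          - δ ^ 2 / 2 * ((x - 1) ^ (1 + 2) + x ^ δ) := rfl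
      _ = _ := by
        rw [gbmGenerator_sub_pow_add_rpow_sub_discount x_ne_zero]
        norm_num
  · convert sub_one_mul_quadratic_le_of_div_sub_le three_pos hδ hx.le using 3 <;> norm_num
  · have : 0 < δ - 3 := sub_pos.2 hδ
    exact neg_neg_of_pos (by positivity)
end

section
/- Let α < 0 < ρ and σ > 0. Then the equation (1/2)σ²β(β−1) + αβ = ρ has a unique negative root β₁, and it satisfies ρ/α < β₁ < 0. Moreover, for any c and L ≥ 0 with c > ρL, the threshold p* = (β₁/(β₁−1))·((ρ−α)/ρ)·(c−ρL) satisfies 0 < p* < c − ρL; in particular, the optimal abandonment price threshold is strictly below the production cost c. -/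
/-!
As an equation in `β`, `(1 / 2) σ² β (β - 1) + α β = ρ` is a quadratic whose leading and
constant coefficients, `σ² / 2` and `-ρ`, have opposite signs, so its two real roots have a negative
product and exactly one of them is negative. At a root `β < 0` the diffusion term
`(1 / 2) σ² β (β - 1)` is positive, hence `α β < ρ`. For `α < 0` this is the bound `ρ / α < β`, and
clearing denominators shows that it is also equivalent to `β / (β - 1) * ((ρ - α) / ρ) < 1`, which
places the threshold below `c - ρ L`.
-/

section Quadratic

theorem eq_of_neg_of_quadratic_eq_zero {K : Type*} [Field K] [LinearOrder K]
    [IsStrictOrderedRing K] {a b c x y : K} (hac : a * c < 0)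
    (hx : x < 0) (hx_root : a * (x * x) + b * x + c = 0)
    (hy : y < 0) (hy_root : a * (y * y) + b * y + c = 0) : x = y := by
  by_contra hxy
  have vieta : a * (x * y) = c := by
    apply mul_left_cancel₀ (sub_ne_zero.mpr hxy)
    linear_combination y * hx_root - x * hy_root
  have nonneg : 0 ≤ a * a * (x * y) :=
    mul_nonneg (mul_self_nonneg a) (mul_pos_of_neg_of_neg hx hy).le
  rw [mul_assoc, vieta] at nonneg
  exact hac.not_ge nonneg

theorem exists_neg_quadratic_eq_zero {a c : ℝ} (b : ℝ) (hac : a * c < 0) :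
    ∃ x < 0, a * (x * x) + b * x + c = 0 := by
  have ha : a ≠ 0 := left_ne_zero_of_mul hac.ne
  have discrim_nonneg : 0 ≤ discrim a b c := by
    unfold discrim
    nlinarith [sq_nonneg b]
  set s := √(discrim a b c)
  have hs : discrim a b c = s * s := (Real.mul_self_sqrt discrim_nonneg).symm
  have root_iff := quadratic_eq_zero_iff ha hs
  have vieta : (-b + s) / (2 * a) * ((-b - s) / (2 * a)) = a * c / a ^ 2 := by
    unfold discrim at hs
    field_simp
    linear_combination hs
  have roots_mul_neg : (-b + s) / (2 * a) * ((-b - s) / (2 * a)) < 0 :=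
    vieta ▸ div_neg_of_neg_of_pos hac (by positivity)
  rcases mul_neg_iff.mp roots_mul_neg with ⟨-, minus_neg⟩ | ⟨plus_neg, -⟩
  · exact ⟨_, minus_neg, (root_iff _).mpr (.inr rfl)⟩
  · exact ⟨_, plus_neg, (root_iff _).mpr (.inl rfl)⟩

theorem existsUnique_neg_quadratic_eq_zero {a c : ℝ} (b : ℝ) (hac : a * c < 0) :
    ∃! x, x < 0 ∧ a * (x * x) + b * x + c = 0 := by
  obtain ⟨x, hx, hx_root⟩ := exists_neg_quadratic_eq_zero b hac
  exact ⟨x, ⟨hx, hx_root⟩, fun y ⟨hy, hy_root⟩ ↦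
    eq_of_neg_of_quadratic_eq_zero hac hy hy_root hx hx_root⟩

end Quadratic

section CharacteristicEquation

variable {σ ρ : ℝ}

theorem existsUnique_neg_characteristic_root (α : ℝ) (hσ : σ ≠ 0) (hρ : 0 < ρ) :
    ∃! β : ℝ, β < 0 ∧ (1 / 2) * σ ^ 2 * β * (β - 1) + α * β = ρ := by
  have coeff_mul_neg : σ ^ 2 / 2 * -ρ < 0 :=
    mul_neg_of_pos_of_neg (by positivity) (neg_neg_of_pos hρ)
  have eq_iff (β : ℝ) : (1 / 2) * σ ^ 2 * β * (β - 1) + α * β = ρ ↔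
      σ ^ 2 / 2 * (β * β) + (α - σ ^ 2 / 2) * β + -ρ = 0 := by
    constructor <;> intro h <;> linear_combination h
  simpa only [eq_iff] using existsUnique_neg_quadratic_eq_zero (α - σ ^ 2 / 2) coeff_mul_neg

theorem drift_mul_lt_of_neg_characteristic_root {α β : ℝ} (hσ : σ ≠ 0) (hβ : β < 0)
    (hβ_root : (1 / 2) * σ ^ 2 * β * (β - 1) + α * β = ρ) : α * β < ρ := by
  have diffusion_pos : 0 < (1 / 2) * σ ^ 2 * β * (β - 1) :=
    mul_pos_of_neg_of_neg (mul_neg_of_pos_of_neg (by positivity) hβ) (by linarith)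
  linarith

end CharacteristicEquation

section ThresholdRatio

variable {K : Type*} [Field K] [LinearOrder K] [IsStrictOrderedRing K] {α ρ β : K}

theorem threshold_ratio_pos (hρ : 0 < ρ) (hαρ : α < ρ) (hβ : β < 0) :
    0 < β / (β - 1) * ((ρ - α) / ρ) :=
  mul_pos (div_pos_of_neg_of_neg hβ (by linarith)) (div_pos (sub_pos.mpr hαρ) hρ)

theorem threshold_ratio_lt_one_iff (hρ : 0 < ρ) (hβ : β < 1) :
    β / (β - 1) * ((ρ - α) / ρ) < 1 ↔ α * β < ρ := by
  have denom_neg : (β - 1) * ρ < 0 := mul_neg_of_neg_of_pos (sub_neg.mpr hβ) hρ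
  rw [div_mul_div_comm, div_lt_one_of_neg denom_neg]
  constructor <;> intro h <;> linarith

end ThresholdRatio

theorem stmt_19_general (α σ ρ : ℝ) (hαρ : α < ρ) (hρ : 0 < ρ) (hσ : σ ≠ 0) :
    (∃! β : ℝ, β < 0 ∧ (1 / 2) * σ ^ 2 * β * (β - 1) + α * β = ρ) ∧
    ∀ β₁ : ℝ, β₁ < 0 → (1 / 2) * σ ^ 2 * β₁ * (β₁ - 1) + α * β₁ = ρ →
      α * β₁ < ρ ∧
      ∀ c L : ℝ, ρ * L < c →
        0 < β₁ / (β₁ - 1) * ((ρ - α) / ρ) * (c - ρ * L) ∧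
        β₁ / (β₁ - 1) * ((ρ - α) / ρ) * (c - ρ * L) < c - ρ * L := by
  refine ⟨existsUnique_neg_characteristic_root α hσ hρ, fun β₁ hβ₁ hβ₁_root ↦ ?_⟩
  have drift_lt : α * β₁ < ρ := drift_mul_lt_of_neg_characteristic_root hσ hβ₁ hβ₁_root
  refine ⟨drift_lt, fun c L hc ↦ ?_⟩
  have net_cost_pos : 0 < c - ρ * L := sub_pos.mpr hc
  have ratio_lt_one : β₁ / (β₁ - 1) * ((ρ - α) / ρ) < 1 :=
    (threshold_ratio_lt_one_iff hρ (hβ₁.trans one_pos)).mpr drift_lt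
  exact ⟨mul_pos (threshold_ratio_pos hρ hαρ hβ₁) net_cost_pos,
    mul_lt_of_lt_one_left net_cost_pos ratio_lt_one⟩

/-- For `α < 0 < ρ` and `σ > 0`, the equation `(1/2)σ²β(β−1) + αβ = ρ` has a unique
negative root `β₁`, which satisfies `ρ/α < β₁ < 0`; moreover for any `c` and `L ≥ 0` with
`c > ρL`, the abandonment threshold `p* = (β₁/(β₁−1))·((ρ−α)/ρ)·(c−ρL)` satisfies
`0 < p* < c − ρL` (in particular the optimal abandonment price threshold is strictly
below the production cost `c`). -/
theorem stmt_19 (α σ ρ : ℝ) (hα : α < 0) (hρ : 0 < ρ) (hσ : 0 < σ) :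
    (∃! β : ℝ, β < 0 ∧ (1/2) * σ ^ 2 * β * (β - 1) + α * β = ρ) ∧
    ∀ β₁ : ℝ, β₁ < 0 → (1/2) * σ ^ 2 * β₁ * (β₁ - 1) + α * β₁ = ρ →
      ρ / α < β₁ ∧
      ∀ c L : ℝ, 0 ≤ L → ρ * L < c →
        0 < β₁ / (β₁ - 1) * ((ρ - α) / ρ) * (c - ρ * L) ∧
        β₁ / (β₁ - 1) * ((ρ - α) / ρ) * (c - ρ * L) < c - ρ * L := by
  obtain ⟨unique_root, bounds⟩ := stmt_19_general α σ ρ (hα.trans hρ) hρ hσ.ne'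
  exact ⟨unique_root, fun β₁ hβ₁ hβ₁_root ↦ (bounds β₁ hβ₁ hβ₁_root).imp
    (div_lt_iff_of_neg' hα).mpr fun threshold_bounds c L _ ↦ threshold_bounds c L⟩
end
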